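/- (Proposition 5, convexity property.) Let S be a right inverse of H. Let p₁(·) and p₂(·) be two strategies with values in the relative interior of Δ that have the same unconditional probabilities, Σ_{v ∈ 𝒱} μ(v) p₁(v) = Σ_{v ∈ 𝒱} μ(v) p₂(v), lying in the relative interior of Δ. Then for every ρ ∈ [0,1], κ_S(ρ p₁(·) + (1−ρ) p₂(·), μ) ≤ ρ κ_S(p₁(·), μ) + (1−ρ) κ_S(p₂(·), μ). -/

import Mathlib

/-!
Write `Ω` for `genEntropy N S` and `W` for the surplus. For `q` in the open simplex put
`u = log S(q)`. The equation `H(S(q)) = q` says that `∇(e^W)(u) = q`; in particular `e^W` is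
differentiable at `u`, since otherwise `fderiv` would be `0`. As `W(v + t·1) = W(v) + t`, the
derivative of `e^W` at `u` in the direction `1` is `e^{W(u)}`, and it is also `∑ q_i = 1`; hence
`W(u) = 0` (`surplus_log_eq_zero`). By convexity of `W`, `e^W ≤ 1` on the segment from `u` to any
`v` with `W(v) = 0`, so `q · (v - u) ≤ 0`: thus `-Ω(q) = q · u` is the maximum of `q · v` over the
set `{W = 0}` (`dot_log_le`).

As a supremum of linear functions, `-Ω` is convex on the open simplex
(`genEntropy_concave`). Mixing strategies with a common unconditional probability leaves the term
`Ω(p⁰)` unchanged, so the cost is a constant plus a nonnegative combination of the convex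
functions `-Ω(p(v))`.
-/

open MeasureTheory Real

/-- The surplus function `W(v) = E[max_i (v_i + ε_i)]` of an additive random utility model,
where `μ` is the distribution of the random utility shocks `ε`. -/
noncomputable def surplus (N : ℕ) (μ : Measure (Fin N → ℝ)) (v : Fin N → ℝ) : ℝ :=
  ∫ x, (⨆ i : Fin N, (v i + x i)) ∂μ

/-- The choice probability `q_i(v) = P(v_i + ε_i ≥ v_j + ε_j for all j)`. -/
noncomputable def choiceProb (N : ℕ) (μ : Measure (Fin N → ℝ)) (v : Fin N → ℝ) (i : Fin N) : ℝ :=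
  (μ {x | ∀ j, v j + x j ≤ v i + x i}).toReal

/-- `H(y) = ∇(e^W)(log y)`, i.e. `H_i(e^v) = ∂(e^{W(v)})/∂v_i`. -/
noncomputable def genH (N : ℕ) (μ : Measure (Fin N → ℝ)) (y : Fin N → ℝ) (i : Fin N) : ℝ :=
  fderiv ℝ (fun v => Real.exp (surplus N μ v)) (fun j => Real.log (y j)) (Pi.single i 1)

/-- The unit simplex `Δ` in `ℝ^N`. -/
def unitSimplex (N : ℕ) : Set (Fin N → ℝ) := {q | (∀ i, 0 ≤ q i) ∧ ∑ i, q i = 1}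

/-- The relative interior of the unit simplex `Δ` in `ℝ^N`. -/
def unitSimplexRI (N : ℕ) : Set (Fin N → ℝ) := {q | (∀ i, 0 < q i) ∧ ∑ i, q i = 1}

/-- The unconditional choice probabilities `p⁰ = ∑_{v ∈ 𝒱} μ(v) p(v)` of a strategy `p(·)`. -/
noncomputable def uncond (N : ℕ) (V : Finset (Fin N → ℝ)) (w : (Fin N → ℝ) → ℝ)
    (p : (Fin N → ℝ) → (Fin N → ℝ)) (i : Fin N) : ℝ :=
  ∑ v ∈ V, w v * p v i

/-- The generalized entropy `Ω_S(p) = −∑_i p_i log S_i(p)`. -/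
noncomputable def genEntropy (N : ℕ) (S : (Fin N → ℝ) → (Fin N → ℝ)) (p : Fin N → ℝ) : ℝ :=
  -∑ i, p i * Real.log (S p i)

/-- The generalized-entropy information cost
`κ_S(p(·), μ) = Ω_S(p⁰) − ∑_{v ∈ 𝒱} μ(v) Ω_S(p(v))`. -/
noncomputable def geriCost (N : ℕ) (V : Finset (Fin N → ℝ)) (w : (Fin N → ℝ) → ℝ)
    (S : (Fin N → ℝ) → (Fin N → ℝ)) (p : (Fin N → ℝ) → (Fin N → ℝ)) : ℝ :=
  genEntropy N S (uncond N V w p) - ∑ v ∈ V, w v * genEntropy N S (p v)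

/-- The GERI objective `G(p(·)) = ∑_{v ∈ 𝒱} μ(v) (v·p(v)) − κ_S(p(·), μ)`. -/
noncomputable def geriObj (N : ℕ) (V : Finset (Fin N → ℝ)) (w : (Fin N → ℝ) → ℝ)
    (S : (Fin N → ℝ) → (Fin N → ℝ)) (p : (Fin N → ℝ) → (Fin N → ℝ)) : ℝ :=
  ∑ v ∈ V, w v * (∑ i, v i * p v i) - geriCost N V w S p

lemma integrable_iSup_add {N : ℕ} (hN : 2 ≤ N) (μ : Measure (Fin N → ℝ))
    [IsProbabilityMeasure μ] (hint : ∀ i, Integrable (fun x => x i) μ) (v : Fin N → ℝ) :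
    Integrable (fun x : Fin N → ℝ => ⨆ i : Fin N, (v i + x i)) μ := by
  have : Nonempty (Fin N) := ⟨⟨0, by omega⟩⟩
  have hi : ∀ i, Integrable (fun x : Fin N → ℝ => |v i + x i|) μ :=
    fun i => ((integrable_const (v i)).add (hint i)).abs
  have hm : Measurable (fun x : Fin N → ℝ => ⨆ i : Fin N, (v i + x i)) :=
    Measurable.iSup fun i => measurable_const.add (measurable_pi_apply i)
  refine (integrable_finsetSum Finset.univ fun i _ => hi i).mono' hm.aestronglyMeasurable
    (Filter.Eventually.of_forall fun x => ?_)
  obtain ⟨i, h⟩ := exists_eq_ciSup_of_finite (f := fun i : Fin N => v i + x i)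
  rw [← h, Real.norm_eq_abs]
  exact Finset.single_le_sum (f := fun i => |v i + x i|) (fun _ _ => abs_nonneg _)
    (Finset.mem_univ i)

lemma surplus_add_const {N : ℕ} (hN : 2 ≤ N) (μ : Measure (Fin N → ℝ))
    [IsProbabilityMeasure μ] (hint : ∀ i, Integrable (fun x => x i) μ) (v : Fin N → ℝ) (t : ℝ) :
    surplus N μ (v + t • (1 : Fin N → ℝ)) = surplus N μ v + t := by
  have : Nonempty (Fin N) := ⟨⟨0, by omega⟩⟩
  have h : ∀ x : Fin N → ℝ, (⨆ i, ((v + t • (1 : Fin N → ℝ)) i + x i))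
      = (⨆ i, (v i + x i)) + t := fun x => by
    rw [ciSup_add (Set.finite_range _).bddAbove]
    congr 1
    ext i
    simp
    ring
  unfold surplus
  simp_rw [h]
  rw [integral_add (integrable_iSup_add hN μ hint v) (integrable_const t)]
  simp

lemma convexOn_surplus {N : ℕ} (hN : 2 ≤ N) (μ : Measure (Fin N → ℝ))
    [IsProbabilityMeasure μ] (hint : ∀ i, Integrable (fun x => x i) μ) :
    ConvexOn ℝ Set.univ (surplus N μ) := by
  have : Nonempty (Fin N) := ⟨⟨0, by omega⟩⟩
  refine ⟨convex_univ, fun u _ v _ a b ha hb hab => ?_⟩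
  have hu := (integrable_iSup_add hN μ hint u).const_mul a
  have hv := (integrable_iSup_add hN μ hint v).const_mul b
  simp only [surplus, smul_eq_mul]
  rw [← integral_const_mul, ← integral_const_mul, ← integral_add hu hv]
  refine integral_mono (integrable_iSup_add hN μ hint _) (hu.add hv) fun x => ciSup_le fun i => ?_
  have h1 := le_ciSup (f := fun i => u i + x i) (Set.finite_range _).bddAbove i
  have h2 := le_ciSup (f := fun i => v i + x i) (Set.finite_range _).bddAbove i
  -- `a + b = 1` distributes `x i` over the two maxima
  have hx : x i = a * x i + b * x i := by rw [← add_mul, hab, one_mul]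
  have e : (a • u + b • v) i + x i = a * (u i + x i) + b * (v i + x i) := by
    simp only [Pi.add_apply, Pi.smul_apply, smul_eq_mul]
    linarith
  rw [e]
  exact add_le_add (mul_le_mul_of_nonneg_left h1 ha) (mul_le_mul_of_nonneg_left h2 hb)

/-- If `H(y) = q` lies in the open simplex, then `e^W` is genuinely differentiable at `log y`,
because the default value `0` of `fderiv` would force `q = 0`. -/
lemma differentiableAt_exp_surplus {N : ℕ} (hN : 2 ≤ N) (μ : Measure (Fin N → ℝ))
    {q y : Fin N → ℝ} (hq : q ∈ unitSimplexRI N) (hy : ∀ i, genH N μ y i = q i) :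
    DifferentiableAt ℝ (fun v => Real.exp (surplus N μ v)) (fun j => Real.log (y j)) := by
  by_contra h
  have h0 := hy ⟨0, by omega⟩
  rw [genH, fderiv_zero_of_not_differentiableAt h] at h0
  exact (hq.1 ⟨0, by omega⟩).ne h0

lemma fderiv_exp_surplus_apply {N : ℕ} (μ : Measure (Fin N → ℝ))
    {q y : Fin N → ℝ} (hy : ∀ i, genH N μ y i = q i) (d : Fin N → ℝ) :
    fderiv ℝ (fun v => Real.exp (surplus N μ v)) (fun j => Real.log (y j)) d
      = ∑ i, q i * d i := by
  conv_lhs => rw [pi_eq_sum_univ' d]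
  rw [map_sum]
  refine Finset.sum_congr rfl fun i _ => ?_
  rw [map_smul, smul_eq_mul, mul_comm, ← hy i, genH]

/-- The point `log y` at which `∇(e^W)` is a probability vector lies on the level set `{W = 0}`:
both `1` and `e^{W(log y)}` are the derivative of `e^W` there in the direction `(1, …, 1)`. -/
lemma surplus_log_eq_zero {N : ℕ} (hN : 2 ≤ N) (μ : Measure (Fin N → ℝ))
    [IsProbabilityMeasure μ] (hint : ∀ i, Integrable (fun x => x i) μ)
    {q y : Fin N → ℝ} (hq : q ∈ unitSimplexRI N) (hy : ∀ i, genH N μ y i = q i) :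
    surplus N μ (fun j => Real.log (y j)) = 0 := by
  set u : Fin N → ℝ := fun j => Real.log (y j) with hu
  have hline := (differentiableAt_exp_surplus hN μ hq hy).hasFDerivAt.hasLineDerivAt
    (1 : Fin N → ℝ)
  rw [fderiv_exp_surplus_apply μ hy] at hline
  have h1 : ∑ i, q i * (1 : Fin N → ℝ) i = 1 := by simpa using hq.2
  rw [h1] at hline
  unfold HasLineDerivAt at hline
  simp_rw [← hu, surplus_add_const hN μ hint] at hline
  have h2 : HasDerivAt (fun t : ℝ => Real.exp (surplus N μ u + t))
      (Real.exp (surplus N μ u + 0) * 1) 0 :=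
    ((hasDerivAt_id (0 : ℝ)).const_add _).exp
  have h3 := hline.unique h2
  rw [mul_one, add_zero] at h3
  exact Real.exp_eq_one_iff _ |>.1 h3.symm

/-- If `H(y) = q`, then `log y` maximizes `q · v` over the level set `{W = 0}`. -/
lemma dot_log_le {N : ℕ} (hN : 2 ≤ N) (μ : Measure (Fin N → ℝ))
    [IsProbabilityMeasure μ] (hint : ∀ i, Integrable (fun x => x i) μ)
    {q y : Fin N → ℝ} (hq : q ∈ unitSimplexRI N) (hy : ∀ i, genH N μ y i = q i)
    {v : Fin N → ℝ} (hv : surplus N μ v = 0) :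
    ∑ i, q i * v i ≤ ∑ i, q i * Real.log (y i) := by
  set u : Fin N → ℝ := fun j => Real.log (y j) with hu
  have hW : surplus N μ u = 0 := surplus_log_eq_zero hN μ hint hq hy
  have hmax : IsLocalMaxOn (fun v => Real.exp (surplus N μ v)) (segment ℝ u v) u := by
    refine IsMaxOn.localize fun z hz => ?_
    have h := (convexOn_surplus hN μ hint).le_on_segment (Set.mem_univ u) (Set.mem_univ v) hz
    rw [hW, hv, max_self] at h
    simpa [hW] using h
  have h := hmax.hasFDerivWithinAt_nonpos
    (differentiableAt_exp_surplus hN μ hq hy).hasFDerivAt.hasFDerivWithinAt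
    (sub_mem_posTangentConeAt_of_segment_subset (y := v) subset_rfl)
  rw [fderiv_exp_surplus_apply μ hy] at h
  simp only [Pi.sub_apply, mul_sub, Finset.sum_sub_distrib] at h
  exact sub_nonpos.1 h

/-- On the open simplex `-Ω(q) = max {q · v | W(v) = 0}` is a maximum of linear functions of `q`,
hence convex. -/
lemma genEntropy_concave {N : ℕ} (hN : 2 ≤ N) (μ : Measure (Fin N → ℝ))
    [IsProbabilityMeasure μ] (hint : ∀ i, Integrable (fun x => x i) μ)
    {S : (Fin N → ℝ) → (Fin N → ℝ)}
    (hS : ∀ q ∈ unitSimplexRI N, ∀ i, genH N μ (S q) i = q i) :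
    ConcaveOn ℝ (unitSimplexRI N) (genEntropy N S) := by
  have hconv : Convex ℝ (unitSimplexRI N) := by
    intro p hp q hq a b ha hb hab
    refine ⟨fun i => convex_Ioi (0 : ℝ) (hp.1 i) (hq.1 i) ha hb hab, ?_⟩
    simp only [Pi.add_apply, Pi.smul_apply, smul_eq_mul, Finset.sum_add_distrib,
      ← Finset.mul_sum, hp.2, hq.2, mul_one, hab]
  refine ⟨hconv, fun p hp q hq a b ha hb hab => ?_⟩
  have hr := hconv hp hq ha hb hab
  -- the maximizer for the mixture competes in the problems for `p` and for `q`
  have hv := surplus_log_eq_zero hN μ hint hr (hS _ hr)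
  have h1 := mul_le_mul_of_nonneg_left (dot_log_le hN μ hint hp (hS p hp) hv) ha
  have h2 := mul_le_mul_of_nonneg_left (dot_log_le hN μ hint hq (hS q hq) hv) hb
  simp only [genEntropy, smul_eq_mul]
  have e : ∑ i, (a • p + b • q) i * Real.log (S (a • p + b • q) i)
      = a * ∑ i, p i * Real.log (S (a • p + b • q) i)
        + b * ∑ i, q i * Real.log (S (a • p + b • q) i) := by
    rw [Finset.mul_sum, Finset.mul_sum, ← Finset.sum_add_distrib]
    refine Finset.sum_congr rfl fun i _ => ?_
    simp only [Pi.add_apply, Pi.smul_apply, smul_eq_mul]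
    ring
  rw [e]
  linarith

/-- Proposition 5, convexity property: let `S` be a right inverse of `H`. For
two strategies `p₁(·)`, `p₂(·)` with values in the relative interior of `Δ` and the same
unconditional probabilities (lying in the relative interior of `Δ`), and any `ρ ∈ [0,1]`,
`κ_S(ρ p₁(·) + (1−ρ) p₂(·), μ) ≤ ρ κ_S(p₁(·), μ) + (1−ρ) κ_S(p₂(·), μ)`. -/
theorem geriCost_convex_on_fixed_marginal (N : ℕ) (hN : 2 ≤ N) (μ : Measure (Fin N → ℝ))
    (hprob : IsProbabilityMeasure μ) (hac : μ ≪ volume)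
    (hsupp : ∀ U : Set (Fin N → ℝ), IsOpen U → U.Nonempty → 0 < μ U)
    (hint : ∀ i, Integrable (fun x => x i) μ)
    (V : Finset (Fin N → ℝ)) (w : (Fin N → ℝ) → ℝ)
    (hw0 : ∀ v ∈ V, 0 ≤ w v) (hw1 : ∑ v ∈ V, w v = 1)
    (S : (Fin N → ℝ) → (Fin N → ℝ))
    (hSright : ∀ q ∈ unitSimplexRI N, ∀ i, genH N μ (S q) i = q i)
    (p₁ p₂ : (Fin N → ℝ) → (Fin N → ℝ))
    (hp₁ : ∀ v ∈ V, p₁ v ∈ unitSimplexRI N)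
    (hp₂ : ∀ v ∈ V, p₂ v ∈ unitSimplexRI N)
    (hsame : uncond N V w p₁ = uncond N V w p₂)
    (hunc : uncond N V w p₁ ∈ unitSimplexRI N)
    (ρ : ℝ) (hρ : ρ ∈ Set.Icc (0 : ℝ) 1) :
    geriCost N V w S (fun v i => ρ * p₁ v i + (1 - ρ) * p₂ v i) ≤
      ρ * geriCost N V w S p₁ + (1 - ρ) * geriCost N V w S p₂ := by
  have hΩ := genEntropy_concave hN μ hint hSright
  have hu : uncond N V w (fun v i => ρ * p₁ v i + (1 - ρ) * p₂ v i) = uncond N V w p₁ := by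
    ext i
    have h := congrFun hsame i
    have e : uncond N V w (fun v i => ρ * p₁ v i + (1 - ρ) * p₂ v i) i
        = ρ * uncond N V w p₁ i + (1 - ρ) * uncond N V w p₂ i := by
      simp only [uncond, Finset.mul_sum, ← Finset.sum_add_distrib]
      exact Finset.sum_congr rfl fun v _ => by ring
    rw [e, ← h]
    ring
  have hsum : ρ * ∑ v ∈ V, w v * genEntropy N S (p₁ v)
      + (1 - ρ) * ∑ v ∈ V, w v * genEntropy N S (p₂ v)
      ≤ ∑ v ∈ V, w v * genEntropy N S (fun i => ρ * p₁ v i + (1 - ρ) * p₂ v i) := by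
    rw [Finset.mul_sum, Finset.mul_sum, ← Finset.sum_add_distrib]
    refine Finset.sum_le_sum fun v hv => ?_
    have h : ρ * genEntropy N S (p₁ v) + (1 - ρ) * genEntropy N S (p₂ v)
        ≤ genEntropy N S (fun i => ρ * p₁ v i + (1 - ρ) * p₂ v i) :=
      hΩ.2 (hp₁ v hv) (hp₂ v hv) hρ.1 (sub_nonneg.2 hρ.2) (by ring)
    have := mul_le_mul_of_nonneg_left h (hw0 v hv)
    linarith
  simp only [geriCost]
  rw [hu, ← hsame]
  linarith
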